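/- arXiv:0903.2158 — 4 statements merged into one kernel-verified Lean document; each statement's English description precedes it below -/
import Mathlib

section
/- Let G be a simple graph on a finite vertex type V that is a tree, let σ : V → V → ℝ be an edge-voltage assignment (σ a b = −σ b a for all a, b), let r : V be a reference node and c : ℝ a reference value. Define v : V → ℝ by v x = c + (σ-sum of the unique path in G from r to x). Then v r = c and for every pair of adjacent vertices a, b one has v b − v a = σ a b. (In circuit terms: in a tree supernode, the voltage of any node is the voltage of the local reference node plus the signed sum of the source voltages along the unique path from the reference node to that node.) -/
/-!
Let `a` and `b` be adjacent, with paths `p : r ⟶ a` and `q : r ⟶ b`. In an acyclic graph one of the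
two paths extends the other by the edge between `a` and `b`: if `a` lies on `q`, then
`q = p.concat _` (`SimpleGraph.IsAcyclic.path_concat`), and otherwise `b` lies on `p`, so that
`p = q.concat _`. The σ-sum grows by the value of `σ` on the added dart, which is `σ a b` in the
first case and `σ b a = -σ a b` in the second.
-/

/-- The σ-sum of a walk: the sum of `σ d.fst d.snd` over the darts of the walk. -/
def walkSigmaSum {V : Type*} {G : SimpleGraph V} (σ : V → V → ℝ) {x y : V}
    (p : G.Walk x y) : ℝ :=
  (p.darts.map fun d => σ d.fst d.snd).sum

theorem walkSigmaSum_concat {V : Type*} {G : SimpleGraph V} (σ : V → V → ℝ) {x y z : V}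
    (p : G.Walk x y) (h : G.Adj y z) :
    walkSigmaSum σ (p.concat h) = walkSigmaSum σ p + σ y z := by
  simp [walkSigmaSum, SimpleGraph.Walk.darts_concat]

/-- In a tree, defining `v x` as `c` plus the σ-sum of the unique path from the
reference node `r` to `x` yields a function with `v r = c` whose increment along
every edge `a ~ b` is `σ a b`. -/
theorem tree_supernode_potential {V : Type*} [Fintype V] (G : SimpleGraph V)
    (hT : G.IsTree) (σ : V → V → ℝ) (hσ : ∀ a b, σ a b = -σ b a)
    (r : V) (c : ℝ) (v : V → ℝ)
    (hv : ∀ (x : V) (p : G.Walk r x), p.IsPath → v x = c + walkSigmaSum σ p) :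
    v r = c ∧ ∀ a b : V, G.Adj a b → v b - v a = σ a b := by
  refine ⟨by simpa [walkSigmaSum] using hv r .nil .nil, fun a b hab => ?_⟩
  obtain ⟨p, hp, -⟩ := hT.existsUnique_path r a
  obtain ⟨q, hq, -⟩ := hT.existsUnique_path r b
  have ha := hv a p hp
  have hb := hv b q hq
  by_cases h : a ∈ q.support
  · rw [hT.isAcyclic.path_concat hp hq hab h, walkSigmaSum_concat] at hb
    linarith
  · have h' := hT.isAcyclic.mem_support_of_ne_mem_support_of_adj_of_isPath hp hq hab h
    rw [hT.isAcyclic.path_concat hq hp hab.symm h', walkSigmaSum_concat] at ha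
    linarith [hσ a b]
end

section
/- Let V and N be finite types, let W : V → V → ℝ be a symmetric admittance matrix (W i j = W j i for all i, j), let π : V → N be a map assigning each node to its supernode, and let v̂ : N → ℝ. Then for every supernode A : N, the sum over all nodes i with π i = A of Σ_j W i j (v̂ (π i) − v̂ (π j)) equals Σ_{B : N} Ŵ A B · (v̂ A − v̂ B), where Ŵ A B = Σ_{i : π i = A} Σ_{j : π j = B} W i j. (Core of the theorem that the Kirchhoff current-law equations written per supernode, for voltages constant on each supernode, are exactly the nodal equations of the contraction along the supernodes; in particular, admittances with both ends in the same supernode drop out.) -/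
open Finset

/-- The Kirchhoff current-law sum over a supernode, for node voltages constant on
each supernode, equals the corresponding row of the nodal equations of the
contraction along the supernodes. -/
theorem supernode_kcl_contraction {V N : Type*} [Fintype V] [Fintype N]
    [DecidableEq N] (W : V → V → ℝ) (hW : ∀ i j, W i j = W j i)
    (π : V → N) (vhat : N → ℝ) (A : N) :
    ∑ i ∈ univ.filter (fun i => π i = A), ∑ j, W i j * (vhat (π i) - vhat (π j)) =
      ∑ B : N,
        (∑ i ∈ univ.filter (fun i => π i = A),
          ∑ j ∈ univ.filter (fun j => π j = B), W i j) * (vhat A - vhat B) := by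
  simp_rw [Finset.sum_mul]
  conv_rhs => rw [Finset.sum_comm]
  apply Finset.sum_congr rfl
  intro i hi
  -- Split the sum over nodes `j` along the fibres of `π`; on each fibre `vhat (π j)` is constant.
  conv_lhs => rw [← Finset.sum_fiberwise univ π]
  refine Finset.sum_congr rfl fun B _ => Finset.sum_congr rfl fun j hj => ?_
  rw [(Finset.mem_filter.mp hi).2, (Finset.mem_filter.mp hj).2]
end

section
/- Let V and N be finite types, W : V → V → ℝ a symmetric admittance matrix (W i j = W j i), π : V → N a map assigning each node to its supernode, v̂ : N → ℝ a vector of supernode reference voltages, and δ : V → ℝ the vector of accumulated source-voltage offsets within supernodes. Set v : V → ℝ, v i = v̂ (π i) + δ i. Then for every supernode A : N, Σ_{i : π i = A} Σ_j W i j (v i − v j) = Σ_{B : N} Ŵ A B · (v̂ A − v̂ B) + Σ_{i : π i = A} Σ_j W i j (δ i − δ j), where Ŵ A B = Σ_{i : π i = A} Σ_{j : π j = B} W i j. Consequently, given current injections J : V → ℝ, the full Kirchhoff current-law system (∀ A, Σ_{i : π i = A} Σ_j W i j (v i − v j) = Σ_{i : π i = A} J i) holds if and only if the reduced system Σ_B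 Ŵ A B (v̂ A − v̂ B) = Σ_{i : π i = A} J i − Σ_{i : π i = A} Σ_j W i j (δ i − δ j) holds for every A. (This is the supernodal-analysis reduction theorem: the reduced system Ŷ_N v̂_N = Ĵ_N has as coefficient matrix the node-admittance matrix of the contraction along the supernodes, and its right-hand side is the current-source sum per supernode plus the admittance-weighted source-voltage corrections of Rule 2.) -/
/-! For `i` in the supernode `A`, linearity gives
`v i - v j = (v̂ A - v̂ (π j)) + (δ i - δ j)`. Grouping the sum over `j` by the fibres of `π` makes
the factor `v̂ A - v̂ (π j)` constant on each fibre, so the first part collects into the contracted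
admittances. The equivalence of the two systems is then a rearrangement, one supernode at a
time. -/

open Finset

/-- Supernodal-analysis reduction: writing each node voltage as
`v i = v̂ (π i) + δ i`, the KCL sum over each supernode splits into the
contracted nodal term plus the source-voltage correction term; consequently the
full KCL system holds iff the reduced system does. -/
theorem supernodal_reduction {V N : Type*} [Fintype V] [Fintype N]
    [DecidableEq N] (W : V → V → ℝ) (hW : ∀ i j, W i j = W j i)
    (π : V → N) (vhat : N → ℝ) (δ : V → ℝ) (J : V → ℝ)
    (v : V → ℝ) (hv : ∀ i, v i = vhat (π i) + δ i) :
    (∀ A : N,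
      ∑ i ∈ univ.filter (fun i => π i = A), ∑ j, W i j * (v i - v j) =
        ∑ B : N,
          (∑ i ∈ univ.filter (fun i => π i = A),
            ∑ j ∈ univ.filter (fun j => π j = B), W i j) * (vhat A - vhat B) +
        ∑ i ∈ univ.filter (fun i => π i = A), ∑ j, W i j * (δ i - δ j)) ∧
    ((∀ A : N,
        ∑ i ∈ univ.filter (fun i => π i = A), ∑ j, W i j * (v i - v j) =
          ∑ i ∈ univ.filter (fun i => π i = A), J i) ↔
      (∀ A : N,
        ∑ B : N,
          (∑ i ∈ univ.filter (fun i => π i = A),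
            ∑ j ∈ univ.filter (fun j => π j = B), W i j) * (vhat A - vhat B) =
          ∑ i ∈ univ.filter (fun i => π i = A), J i -
            ∑ i ∈ univ.filter (fun i => π i = A), ∑ j, W i j * (δ i - δ j))) := by
  have key : ∀ A : N,
      ∑ i ∈ univ.filter (fun i => π i = A), ∑ j, W i j * (v i - v j) =
        ∑ B : N,
          (∑ i ∈ univ.filter (fun i => π i = A),
            ∑ j ∈ univ.filter (fun j => π j = B), W i j) * (vhat A - vhat B) +
        ∑ i ∈ univ.filter (fun i => π i = A), ∑ j, W i j * (δ i - δ j) := by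
    intro A
    simp_rw [Finset.sum_mul]
    rw [Finset.sum_comm (s := (univ : Finset N)), ← Finset.sum_add_distrib]
    refine Finset.sum_congr rfl fun i hi => ?_
    have hiA : π i = A := (Finset.mem_filter.mp hi).2
    have fib : ∑ B : N, ∑ j ∈ univ.filter (fun j => π j = B), W i j * (vhat A - vhat B) =
        ∑ j, W i j * (vhat A - vhat (π j)) := by
      rw [← Finset.sum_fiberwise univ π]
      refine Finset.sum_congr rfl fun B _ => Finset.sum_congr rfl fun j hj => ?_
      rw [(Finset.mem_filter.mp hj).2]
    rw [fib, ← Finset.sum_add_distrib]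
    refine Finset.sum_congr rfl fun j _ => ?_
    rw [hv i, hv j, hiA]
    ring
  refine ⟨key, forall_congr' fun A => ?_⟩
  rw [key A, eq_sub_iff_add_eq]
end

section
/- Let V be a finite type and W : V → V → ℝ a symmetric matrix with W i j ≥ 0 and W i i = 0 for all i, j, and suppose the simple graph on V with i adjacent to j iff W i j > 0 is connected. Fix a ground vertex g : V. Then the matrix Y indexed by the vertices different from g, with diagonal entry Y i i = Σ_{k : V} W i k and off-diagonal entry Y i j = −W i j (i ≠ j, i ≠ g, j ≠ g), is positive definite; in particular it is invertible, so the nodal system Y v = J has a unique solution for every right-hand side. (Unique solvability of the (super)nodal equations: the node-admittance matrix obtained from the weighted Laplacian by deleting the row and column of the datum node is invertible whenever the deactivated circuit is connected and all admittances are positive.) -/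
/-!
Extend a vector `x` on the non-datum nodes to a node potential `u` on all of `V` by grounding the
datum, `u g = 0`. Because `W i i = 0`, Kirchhoff's law reads
`(Y x) i = ∑ k, W i k * (u i - u k)`, and symmetrizing the double sum gives the dissipated power
`2 * (x ⬝ᵥ Y x) = ∑ i, ∑ k, W i k * (u i - u k) ^ 2`.
Every term is nonnegative, and if all vanish then `u` is constant along the edges of the connected
graph, hence equal to `u g = 0` everywhere. So the quadratic form is positive definite; a positive
definite matrix is invertible, which gives unique solvability.
-/


open Finset

/-- The node-admittance matrix with respect to a datum node `g`: diagonal entry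
is the sum of admittances incident with the node, off-diagonal entry is the
negative of the connecting admittance. -/
def nodeAdmittanceMatrix {V : Type*} [Fintype V] [DecidableEq V]
    (W : V → V → ℝ) (g : V) :
    Matrix {i : V // i ≠ g} {i : V // i ≠ g} ℝ :=
  fun i j => if i = j then ∑ k : V, W i.1 k else -W i.1 j.1

/-- Extension of a vector on the non-datum nodes to all nodes, with value `0` at the datum `g`. -/
def groundedPotential {V : Type*} [DecidableEq V] (g : V) (x : {i : V // i ≠ g} → ℝ) (k : V) : ℝ :=
  if h : k ≠ g then x ⟨k, h⟩ else 0

theorem groundedPotential_datum {V : Type*} [DecidableEq V] (g : V) (x : {i : V // i ≠ g} → ℝ) :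
    groundedPotential g x g = 0 := by
  simp [groundedPotential]

theorem groundedPotential_coe {V : Type*} [DecidableEq V] (g : V) (x : {i : V // i ≠ g} → ℝ)
    (i : {i : V // i ≠ g}) : groundedPotential g x i.1 = x i := by
  simp [groundedPotential, i.2]

theorem sum_nonDatum {V : Type*} [Fintype V] [DecidableEq V] (g : V) (f : V → ℝ) (hf : f g = 0) :
    ∑ j : {i : V // i ≠ g}, f j.1 = ∑ k : V, f k := by
  refine Fintype.sum_of_injective Subtype.val Subtype.val_injective _ _ ?_ (fun _ => rfl)
  intro k hk
  have : k = g := by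
    by_contra h
    exact hk ⟨⟨k, h⟩, rfl⟩
  rw [this, hf]

/-- Kirchhoff's current law: each row of the nodal system sums the currents leaving that node. -/
theorem nodeAdmittanceMatrix_mulVec {V : Type*} [Fintype V] [DecidableEq V]
    (W : V → V → ℝ) (hdiag : ∀ i, W i i = 0) (g : V) (x : {i : V // i ≠ g} → ℝ)
    (i : {i : V // i ≠ g}) :
    (nodeAdmittanceMatrix W g).mulVec x i =
      ∑ k : V, W i.1 k * (groundedPotential g x i.1 - groundedPotential g x k) := by
  have hentry : ∀ j, nodeAdmittanceMatrix W g i j * x j =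
      (if i = j then (∑ k : V, W i.1 k) * x i else 0) -
        W i.1 j.1 * groundedPotential g x j.1 := by
    intro j
    rw [groundedPotential_coe]
    by_cases h : i = j
    · subst h
      simp [nodeAdmittanceMatrix, hdiag]
    · simp [nodeAdmittanceMatrix, h]
  simp only [Matrix.mulVec, dotProduct, hentry, Finset.sum_sub_distrib, mul_sub]
  rw [sum_nonDatum g (fun k => W i.1 k * groundedPotential g x k)
    (by simp [groundedPotential_datum]), groundedPotential_coe, ← Finset.sum_mul]
  simp

open Matrix in
/-- The quadratic form of the node-admittance matrix is the dissipated power; the factor `2`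
appears because the double sum counts each edge in both directions. -/
theorem two_mul_dotProduct_nodeAdmittanceMatrix {V : Type*} [Fintype V] [DecidableEq V]
    (W : V → V → ℝ) (hsym : ∀ i j, W i j = W j i) (hdiag : ∀ i, W i i = 0) (g : V)
    (x : {i : V // i ≠ g} → ℝ) :
    2 * (x ⬝ᵥ (nodeAdmittanceMatrix W g).mulVec x) =
      ∑ i : V, ∑ k : V, W i k * (groundedPotential g x i - groundedPotential g x k) ^ 2 := by
  set u := groundedPotential g x with hu
  have h1 : x ⬝ᵥ (nodeAdmittanceMatrix W g).mulVec x =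
      ∑ i : V, ∑ k : V, u i * (W i k * (u i - u k)) := by
    rw [← sum_nonDatum g (fun i => ∑ k : V, u i * (W i k * (u i - u k)))
      (by simp [hu, groundedPotential_datum])]
    refine Finset.sum_congr rfl fun i _ => ?_
    rw [nodeAdmittanceMatrix_mulVec W hdiag, Finset.mul_sum, hu, groundedPotential_coe]
  have h2 : ∑ i : V, ∑ k : V, u i * (W i k * (u i - u k)) =
      ∑ i : V, ∑ k : V, u k * (W i k * (u k - u i)) := by
    rw [Finset.sum_comm]
    refine Finset.sum_congr rfl fun i _ => Finset.sum_congr rfl fun k _ => ?_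
    rw [hsym k i]
  rw [two_mul]
  nth_rewrite 2 [h1]
  rw [h2, h1, ← Finset.sum_add_distrib]
  refine Finset.sum_congr rfl fun i _ => ?_
  rw [← Finset.sum_add_distrib]
  exact Finset.sum_congr rfl fun k _ => by ring

/-- If all admittances are nonnegative with zero diagonal and the associated
graph is connected, then the node-admittance matrix obtained by deleting the
datum node's row and column is positive definite; in particular the nodal
system has a unique solution for every right-hand side. -/
theorem nodeAdmittanceMatrix_posDef {V : Type*} [Fintype V] [DecidableEq V]
    (W : V → V → ℝ) (hsym : ∀ i j, W i j = W j i) (hnn : ∀ i j, 0 ≤ W i j)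
    (hdiag : ∀ i, W i i = 0)
    (G : SimpleGraph V) (hG : ∀ i j, G.Adj i j ↔ 0 < W i j)
    (hconn : G.Connected) (g : V) :
    (nodeAdmittanceMatrix W g).PosDef ∧
      ∀ J : {i : V // i ≠ g} → ℝ,
        ∃! v : {i : V // i ≠ g} → ℝ, (nodeAdmittanceMatrix W g).mulVec v = J := by
  have hpos : (nodeAdmittanceMatrix W g).PosDef := by
    refine Matrix.PosDef.of_dotProduct_mulVec_pos ?_ ?_
    · ext i j
      by_cases h : i = j
      · simp [h]
      · simp [nodeAdmittanceMatrix, h, Ne.symm h, hsym j.1 i.1]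
    · intro x hx
      rw [star_trivial]
      have hpow := two_mul_dotProduct_nodeAdmittanceMatrix W hsym hdiag g x
      set u := groundedPotential g x with hu
      have hterm : ∀ i k, 0 ≤ W i k * (u i - u k) ^ 2 := fun i k =>
        mul_nonneg (hnn i k) (sq_nonneg _)
      have hrow : ∀ i, 0 ≤ ∑ k : V, W i k * (u i - u k) ^ 2 := fun i =>
        Finset.sum_nonneg fun k _ => hterm i k
      have hnonneg := Finset.sum_nonneg fun i (_ : i ∈ Finset.univ) => hrow i
      by_contra hle
      have hzero : ∑ i : V, ∑ k : V, W i k * (u i - u k) ^ 2 = 0 := by linarith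
      have hadj : ∀ i k, G.Adj i k → u i = u k := by
        intro i k hik
        have hi := (Finset.sum_eq_zero_iff_of_nonneg fun i _ => hrow i).1 hzero i
          (Finset.mem_univ i)
        have hk := (Finset.sum_eq_zero_iff_of_nonneg fun k _ => hterm i k).1 hi k
          (Finset.mem_univ k)
        have hsq := (mul_eq_zero.1 hk).resolve_left ((hG i k).1 hik).ne'
        exact sub_eq_zero.1 (pow_eq_zero_iff two_ne_zero |>.1 hsq)
      have hwalk : ∀ i k, G.Walk i k → u i = u k := by
        intro i k p
        induction p with
        | nil => rfl
        | cons h _ ih => exact (hadj _ _ h).trans ih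
      apply hx
      funext i
      obtain ⟨p⟩ := hconn.preconnected i.1 g
      rw [← groundedPotential_coe g x i, ← hu, hwalk _ _ p, hu, groundedPotential_datum]
      rfl
  refine ⟨hpos, fun J => ?_⟩
  have hbij : Function.Bijective (nodeAdmittanceMatrix W g).mulVec :=
    ⟨Matrix.mulVec_injective_iff_isUnit.2 hpos.isUnit,
      Matrix.mulVec_surjective_iff_isUnit.2 hpos.isUnit⟩
  exact hbij.existsUnique J
end
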